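/- Let ν be a place of the global function field K and let M be a Zariski closed subset of K_ν^m. Then for any compact subset A of M, any ε > 0 and integers d, D there exists a compact subset B of M such that the following holds: given any neighbourhood 𝒬₀ of B in K_ν^m, there exists a neighbourhood 𝒬 of A in K_ν^m such that for any unipotent subgroup U of GL_m(K_ν) with a polynomial diffeomorphism 𝐮 : K_ν^d → U of degree ≤ D onto U satisfying 𝐮(𝟎) = e, any a ∈ K_ν^m ∖ 𝒬₀, and any neighbourhood B(r) ⊂ K_ν^d of the origin, one has |{𝐭 ∈ B(r) : 𝐮(𝐭)a ∈ 𝒬}| ≤ ε |{𝐭 ∈ B(r) : 𝐮(𝐭)a ∈ 𝒬₀}|. -/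

import Mathlib

/-!
Linearization estimate near a Zariski closed set (Einsiedler–Mohammadi,
Proposition 5.3, after Tomanov and Dani–Margulis Prop. 4.2).  `k = K_ν` is a
nonarchimedean local field, `M ⊆ k^m` a Zariski closed subset.  For every
compact `A ⊆ M`, `ε > 0` and integers `d, D` there is a compact `B ⊆ M` such
that: for every neighbourhood `𝒬₀` of `B` there is a neighbourhood `𝒬` of `A`
such that for every unipotent subgroup `U ⊆ GL_m(k)` parametrized by a
polynomial map `𝐮 : k^d → U` of degree `≤ D` with `𝐮(0) = e`, every
`a ∈ k^m ∖ 𝒬₀` and every ball `B(r)` around the origin,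
`|{t ∈ B(r) : 𝐮(t)a ∈ 𝒬}| ≤ ε |{t ∈ B(r) : 𝐮(t)a ∈ 𝒬₀}|`.
-/

open MeasureTheory MvPolynomial

/-!
The engine is that polynomials of bounded degree are rarely small compared with their own values.
On the unit ball this holds because zero sets of nonzero polynomials are null and the unit sphere of
the finite-dimensional space of polynomials of degree at most `N` is compact; affine changes of
variable carry it over to every ball with the same constant.

Let `B` be the part of `M` in a ball much larger than `A`. Cover the open set `{t | 𝐮(t)a ∈ 𝒬₀}` by
its maximal balls. The next larger ball around each of them contains a point `s` with `𝐮(s)a ∉ 𝒬₀`,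
where one of finitely many polynomials (an equation of `M`, or a coordinate if `𝐮(s)a` is far away)
is much larger than it is anywhere on `𝒬`. Hence `𝐮(t)a ∈ 𝒬` occupies only a small proportion of
each maximal ball, and these balls are disjoint because the metric is ultrametric.
-/

open Filter Metric Set Topology
open scoped ENNReal

section Substitution

variable {σ τ R : Type*} [CommSemiring R]

lemma eval_bind₁ (g : σ → MvPolynomial τ R) (p : MvPolynomial σ R) (y : τ → R) :
    eval y (bind₁ g p) = eval (fun i => eval y (g i)) p :=
  eval₂Hom_bind₁ (RingHom.id R) y g p

lemma totalDegree_bind₁_le {D : ℕ} {g : σ → MvPolynomial τ R}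
    (hg : ∀ i, (g i).totalDegree ≤ D) (p : MvPolynomial σ R) :
    (bind₁ g p).totalDegree ≤ p.totalDegree * D := by
  rw [← aeval_eq_bind₁, aeval_def, eval₂_eq, algebraMap_eq]
  refine totalDegree_finsetSum_le fun e he => ?_
  calc (C (coeff e p) * ∏ i ∈ e.support, g i ^ e i).totalDegree
      ≤ (C (coeff e p)).totalDegree + (∏ i ∈ e.support, g i ^ e i).totalDegree :=
        totalDegree_mul _ _
    _ ≤ ∑ i ∈ e.support, (g i ^ e i).totalDegree := by
        rw [totalDegree_C, zero_add]
        exact totalDegree_finsetProd _ _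
    _ ≤ ∑ i ∈ e.support, e i * D :=
        Finset.sum_le_sum fun i _ =>
          (totalDegree_pow _ _).trans (Nat.mul_le_mul_left _ (hg i))
    _ = e.degree * D := (Finset.sum_mul _ _ _).symm
    _ ≤ p.totalDegree * D := Nat.mul_le_mul_right _ (le_totalDegree he)

lemma exists_eval_eq_eval_affine (p : MvPolynomial σ R) (x : σ → R) (u : R) :
    ∃ q : MvPolynomial σ R, q.totalDegree ≤ p.totalDegree ∧
      ∀ y, eval y q = eval (x + u • y) p := by
  refine ⟨bind₁ (fun i => C (x i) + C u * X i) p, ?_, fun y => ?_⟩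
  · have hlin (i : σ) : (C (x i) + C u * X i).totalDegree ≤ 1 :=
      (totalDegree_add _ _).trans <| max_le (by rw [totalDegree_C]; exact zero_le_one) <| by
        rw [C_mul_X_eq_monomial]
        exact (totalDegree_monomial_le _ _).trans_eq (Finsupp.sum_single_index rfl)
    exact (totalDegree_bind₁_le hlin p).trans_eq (mul_one _)
  · simp only [eval_bind₁, map_add, map_mul, eval_C, eval_X]
    rfl

end Substitution

lemma finite_setOfPred_eval_line_eq_zero {σ R : Type*} [CommRing R] [IsDomain R]
    {p : MvPolynomial σ R} {x : σ → R} (hx : eval x p ≠ 0) (y : σ → R) :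
    {c : R | eval (x + c • y) p = 0}.Finite := by
  let q : Polynomial R := aeval (fun i => Polynomial.C (x i) + Polynomial.X * Polynomial.C (y i)) p
  have hq (c : R) : q.eval c = eval (x + c • y) p := by
    rw [← Polynomial.coe_aeval_eq_eval, comp_aeval_apply, ← coe_aeval_eq_eval, RingHom.coe_coe]
    congr 2
    ext i
    simp [mul_comm (y i)]
  have hq₀ : q ≠ 0 := fun h => hx <| by simpa [h] using (hq 0).symm
  refine (Polynomial.finite_setOfPred_isRoot hq₀).subset fun c hc => ?_
  exact (hq c).trans hc

lemma exists_injective_norm_eq_one (k : Type*) [NontriviallyNormedField k] [IsUltrametricDist k] :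
    ∃ c : ℕ → k, Function.Injective c ∧ ∀ n, ‖c n‖ = 1 := by
  obtain ⟨ϖ, hϖ₀, hϖ₁⟩ := NormedField.exists_norm_lt_one k
  refine ⟨fun n => 1 + ϖ ^ (n + 1), fun a b hab => ?_, fun n => ?_⟩
  · have hpow : ‖ϖ‖ ^ (a + 1) = ‖ϖ‖ ^ (b + 1) := by
      rw [← norm_pow, ← norm_pow, add_left_cancel hab]
    exact Nat.succ_injective (pow_right_injective₀ hϖ₀ hϖ₁.ne hpow)
  · have hlt : ‖ϖ ^ (n + 1)‖ < ‖(1 : k)‖ := by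
      rw [norm_pow, norm_one]
      exact pow_lt_one₀ (norm_nonneg _) hϖ₁ n.succ_ne_zero
    rw [IsUltrametricDist.norm_add_eq_max_of_norm_ne_norm hlt.ne', max_eq_left hlt.le, norm_one]

section HaarScaling

variable {k E : Type*} [NormedAddCommGroup E] [ProperSpace E]
  [MeasurableSpace E] [BorelSpace E] (μ : Measure E) [μ.IsAddHaarMeasure]

lemma exists_measure_eq_mul_measure_affine_preimage [NormedField k] [NormedSpace k E]
    {u : k} (hu : u ≠ 0) :
    ∃ κ : ℝ≥0∞, ∀ (x : E) (T : Set E), μ T = κ * μ {y | x + u • y ∈ T} := by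
  refine ⟨distribHaarChar E (Units.mk0 u hu), fun x T => ?_⟩
  rw [distribHaarChar_mul, ← measure_preimage_add μ x T]
  congr 1
  ext t
  rw [mem_smul_set_iff_inv_smul_mem, mem_ofPred_eq]
  change x + t ∈ T ↔ x + Units.mk0 u hu • (Units.mk0 u hu)⁻¹ • t ∈ T
  rw [smul_inv_smul]

lemma measure_smul_preimage_of_norm_eq_one [NormedField k] [NormedSpace k E]
    {c : k} (hc : ‖c‖ = 1) (T : Set E) :
    μ {y | c • y ∈ T} = μ T := by
  have hc₀ : c ≠ 0 := norm_ne_zero_iff.1 (hc ▸ one_ne_zero)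
  obtain ⟨κ, hκ⟩ := exists_measure_eq_mul_measure_affine_preimage μ hc₀
  have hball : μ (closedBall 0 1) = κ * μ (closedBall 0 1) := by
    simpa [norm_smul, hc, closedBall] using hκ 0 (closedBall 0 1)
  have hκ₁ : κ = 1 := by
    refine (ENNReal.mul_left_inj (measure_closedBall_pos μ (0 : E) one_pos).ne'
      measure_closedBall_lt_top.ne).1 ?_
    rw [one_mul, ← hball]
  simpa [hκ₁] using (hκ 0 T).symm

/- Scaling by infinitely many units preserves `μ`, while each point lies in only finitely many of
the scaled copies of `s`. -/
lemma measure_eq_zero_of_finite_smul_mem [NontriviallyNormedField k] [IsUltrametricDist k]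
    [NormedSpace k E] {s : Set E} (hs : MeasurableSet s)
    (hfin : ∀ y, {c : k | c • y ∈ s}.Finite) : μ s = 0 := by
  obtain ⟨c, hc_inj, hc⟩ := exists_injective_norm_eq_one k
  have hbounded (R : ℕ) : μ (s ∩ closedBall 0 R) = 0 := by
    let T (n : ℕ) : Set E := {y | c n • y ∈ s ∩ closedBall 0 R}
    have hT (n : ℕ) : μ (T n) = μ (s ∩ closedBall 0 R) :=
      measure_smul_preimage_of_norm_eq_one μ (hc n) _
    have hT_meas (n : ℕ) : MeasurableSet (T n) :=
      (measurable_const_smul (c n)) (hs.inter isClosed_closedBall.measurableSet)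
    have hT_sub (n : ℕ) : T n ⊆ closedBall 0 R := fun y hy => by
      simpa [norm_smul, hc] using hy.2
    have hT_fin (y : E) : ∀ᶠ n in atTop, y ∈ T n ↔ y ∈ (∅ : Set E) := by
      have : {n | y ∈ T n}.Finite :=
        ((hfin y).preimage hc_inj.injOn).subset fun n hn => hn.1
      filter_upwards [Nat.cofinite_eq_atTop ▸ this.eventually_cofinite_notMem] with n hn
      exact iff_of_false hn (notMem_empty y)
    have hlim := tendsto_measure_of_tendsto_indicator atTop hT_meas (μ := μ)
      isClosed_closedBall.measurableSet measure_closedBall_lt_top.ne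
      (.of_forall hT_sub) hT_fin
    simp only [hT, measure_empty] at hlim
    exact tendsto_nhds_unique tendsto_const_nhds hlim
  rw [← inter_univ s, ← iUnion_closedBall_nat (0 : E), inter_iUnion]
  exact measure_iUnion_null hbounded

end HaarScaling

lemma measure_setOfPred_eval_eq_zero {k σ : Type*} [NontriviallyNormedField k] [ProperSpace k]
    [IsUltrametricDist k] [Finite σ] [MeasurableSpace (σ → k)] [BorelSpace (σ → k)]
    (μ : Measure (σ → k)) [μ.IsAddHaarMeasure] {p : MvPolynomial σ k} (hp : p ≠ 0) :
    μ {t | eval t p = 0} = 0 := by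
  have := Fintype.ofFinite σ
  obtain ⟨a, ha⟩ : ∃ a, eval a p ≠ 0 := by
    by_contra! h
    exact hp (MvPolynomial.funext fun a => by rw [h a, map_zero])
  rw [← measure_preimage_add μ a]
  refine measure_eq_zero_of_finite_smul_mem (k := k) μ ?_ (finite_setOfPred_eval_line_eq_zero ha)
  exact (isClosed_singleton.preimage
    ((MvPolynomial.continuous_eval p).comp (continuous_const_add a))).measurableSet

lemma exists_norm_apply_eq_norm {X F : Type*} [TopologicalSpace X] [CompactSpace X] [Nonempty X]
    [SeminormedAddCommGroup F] (f : C(X, F)) : ∃ x, ‖f x‖ = ‖f‖ := by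
  obtain ⟨x, -, hx⟩ := isCompact_univ.exists_isMaxOn univ_nonempty f.continuous.norm.continuousOn
  exact ⟨x, (f.norm_coe_le_norm x).antisymm
    ((f.norm_le (norm_nonneg _)).2 fun y => hx (mem_univ y))⟩

section FiniteDimensional

variable {k X : Type*} [NontriviallyNormedField k] [MeasurableSpace X] [TopologicalSpace X]
  [BorelSpace X] (μ : Measure X) [IsFiniteMeasure μ]

lemma exists_measure_norm_lt_le {f : C(X, k)} (hf : μ {x | f x = 0} = 0)
    {ε : ℝ≥0∞} (hε : ε ≠ 0) : ∃ η > 0, μ {x | ‖f x‖ < η} ≤ ε := by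
  let T (n : ℕ) : Set X := {x | ‖f x‖ < 1 / ((n : ℝ) + 1)}
  have hT_meas (n : ℕ) : MeasurableSet (T n) :=
    (isOpen_lt f.continuous.norm continuous_const).measurableSet
  have hT_zeros (x : X) : ∀ᶠ n in atTop, x ∈ T n ↔ x ∈ {x | f x = 0} := by
    rcases eq_or_ne (f x) 0 with hx | hx
    · refine .of_forall fun n => iff_of_true ?_ hx
      rw [mem_ofPred_eq, hx, norm_zero]
      exact Nat.one_div_pos_of_nat
    · filter_upwards [tendsto_one_div_add_atTop_nhds_zero_nat.eventually_lt_const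
        (norm_pos_iff.2 hx)] with n hn
      exact iff_of_false hn.not_gt hx
  have hlim := tendsto_measure_of_tendsto_indicator atTop hT_meas (μ := μ) MeasurableSet.univ
    (measure_ne_top μ _) (.of_forall fun n => subset_univ _) hT_zeros
  rw [hf] at hlim
  obtain ⟨n, hn⟩ := (hlim.eventually_lt_const (pos_iff_ne_zero.2 hε)).exists
  exact ⟨1 / ((n : ℝ) + 1), Nat.one_div_pos_of_nat, hn.le⟩

variable [CompactSpace X]

lemma exists_forall_measure_norm_lt_le_of_isCompact {S : Set C(X, k)} (hS : IsCompact S)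
    (hzero : ∀ f ∈ S, μ {x | f x = 0} = 0) {ε : ℝ≥0∞} (hε : ε ≠ 0) :
    ∃ η > 0, ∀ f ∈ S, μ {x | ‖f x‖ < η} ≤ ε := by
  refine hS.induction_on (p := fun T => ∃ η > 0, ∀ f ∈ T, μ {x | ‖f x‖ < η} ≤ ε)
    ⟨1, one_pos, fun f hf => hf.elim⟩
    (fun T T' hTT' ⟨η, hη, h⟩ => ⟨η, hη, fun f hf => h f (hTT' hf)⟩) ?_ fun f hf => ?_
  · rintro T T' ⟨η, hη, h⟩ ⟨η', hη', h'⟩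
    refine ⟨min η η', lt_min hη hη', ?_⟩
    rintro f (hf | hf)
    · refine (measure_mono fun x hx => ?_).trans (h f hf)
      exact lt_of_lt_of_le hx (min_le_left η η')
    · refine (measure_mono fun x hx => ?_).trans (h' f hf)
      exact lt_of_lt_of_le hx (min_le_right η η')
  · obtain ⟨η, hη, h⟩ := exists_measure_norm_lt_le μ (hzero f hf) hε
    refine ⟨ball f (η / 2), mem_nhdsWithin_of_mem_nhds (ball_mem_nhds f (half_pos hη)),
      η / 2, half_pos hη, fun g hg => (measure_mono fun x hx => ?_).trans h⟩
    calc ‖f x‖ = ‖g x - (g - f) x‖ := by rw [ContinuousMap.sub_apply, sub_sub_cancel]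
      _ ≤ ‖g x‖ + ‖(g - f) x‖ := norm_sub_le _ _
      _ < η / 2 + η / 2 :=
        add_lt_add hx (((g - f).norm_coe_le_norm x).trans_lt (mem_ball_iff_norm.1 hg))
      _ = η := add_halves η

lemma exists_forall_measure_norm_lt_mul_norm_le [LocallyCompactSpace k]
    (V : Submodule k C(X, k)) [FiniteDimensional k V]
    (hzero : ∀ f ∈ V, f ≠ 0 → μ {x | f x = 0} = 0) {ε : ℝ≥0∞} (hε : ε ≠ 0) :
    ∃ η > 0, ∀ f ∈ V, μ {x | ‖f x‖ < η * ‖f‖} ≤ ε := by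
  have : ProperSpace V := FiniteDimensional.proper k V
  obtain ⟨η, hη, h⟩ := exists_forall_measure_norm_lt_le_of_isCompact μ
    ((isCompact_sphere (0 : V) 1).image continuous_subtype_val) (ε := ε) (by
      rintro _ ⟨f, hf, rfl⟩
      refine hzero f f.2 fun hf₀ => ?_
      rw [mem_sphere_zero_iff_norm, Submodule.coe_norm, hf₀, norm_zero] at hf
      exact zero_ne_one hf) hε
  refine ⟨η, hη, fun f hf => ?_⟩
  rcases eq_or_ne f 0 with rfl | hf₀
  · simp
  have : Nonempty X := by
    by_contra hX
    rw [not_nonempty_iff] at hX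
    exact hf₀ (ContinuousMap.ext isEmptyElim)
  obtain ⟨x₁, hx₁⟩ := exists_norm_apply_eq_norm f
  have hfx₁ : 0 < ‖f x₁‖ := hx₁ ▸ norm_pos_iff.2 hf₀
  have hsphere : (f x₁)⁻¹ • (⟨f, hf⟩ : V) ∈ sphere (0 : V) 1 := by
    rw [mem_sphere_zero_iff_norm, norm_smul, norm_inv, Submodule.coe_norm, ← hx₁,
      inv_mul_cancel₀ hfx₁.ne']
  refine (measure_mono fun x hx => ?_).trans (h _ (mem_image_of_mem _ hsphere))
  rw [mem_ofPred_eq, ← hx₁, mul_comm, ← inv_mul_lt_iff₀ hfx₁] at hx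
  simpa using hx

end FiniteDimensional

lemma exists_forall_measure_norm_eval_lt_unitBall {k σ : Type*} [NontriviallyNormedField k]
    [ProperSpace k] [IsUltrametricDist k] [Fintype σ] [MeasurableSpace (σ → k)]
    [BorelSpace (σ → k)] (μ : Measure (σ → k)) [μ.IsAddHaarMeasure] (N : ℕ) {ε : ℝ≥0∞}
    (hε : ε ≠ 0) :
    ∃ η > 0, ∀ p : MvPolynomial σ k, p.totalDegree ≤ N → ∀ x ∈ closedBall (0 : σ → k) 1,
      μ {t ∈ closedBall 0 1 | ‖eval t p‖ < η * ‖eval x p‖} ≤ ε := by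
  let K := closedBall (0 : σ → k) 1
  have hK : MeasurableSet K := isClosed_closedBall.measurableSet
  have : CompactSpace K := isCompact_iff_compactSpace.1 (isCompact_closedBall 0 1)
  let ν : Measure K := μ.comap Subtype.val
  have hν (P : (σ → k) → Prop) : ν {t : K | P t} = μ {t ∈ K | P t} := by
    rw [comap_subtype_coe_apply hK]
    congr 1
    ext t
    simp [and_comm]
  have : IsFiniteMeasure ν := ⟨by
    rw [comap_subtype_coe_apply hK, image_univ, Subtype.range_coe]
    exact measure_closedBall_lt_top⟩
  let restrict : MvPolynomial σ k →ₐ[k] C(K, k) :=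
    aeval fun i => ⟨fun t => t.1 i, (continuous_apply i).comp continuous_subtype_val⟩
  have hrestrict (p : MvPolynomial σ k) (t : K) : restrict p t = eval t.1 p := by
    rw [← coe_aeval_eq_eval]
    exact comp_aeval_apply _ (ContinuousMap.evalAlgHom k k t) p
  let V : Submodule k C(K, k) := (restrictTotalDegree σ k N).map restrict.toLinearMap
  obtain ⟨η, hη, h⟩ := exists_forall_measure_norm_lt_mul_norm_le ν V (ε := ε) (by
    rintro _ ⟨p, -, rfl⟩ hp
    have hp₀ : p ≠ 0 := by
      rintro rfl
      exact hp (map_zero restrict)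
    simp only [AlgHom.toLinearMap_apply, hrestrict]
    rw [hν fun t => eval t p = 0]
    exact measure_mono_null (fun t ht => ht.2) (measure_setOfPred_eval_eq_zero μ hp₀)) hε
  refine ⟨η, hη, fun p hp x hx => ?_⟩
  have hpV : restrict p ∈ V :=
    Submodule.mem_map_of_mem ((mem_restrictTotalDegree _ _ _).2 hp)
  rw [← hν fun t => ‖eval t p‖ < η * ‖eval x p‖]
  refine (measure_mono fun t ht => ?_).trans (h _ hpV)
  rw [mem_ofPred_eq, hrestrict]
  refine ht.trans_le (mul_le_mul_of_nonneg_left ?_ hη.le)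
  rw [← hrestrict p ⟨x, hx⟩]
  exact (restrict p).norm_coe_le_norm _

/-- The functions that are rarely small compared with their own values, a qualitative analogue of
the `(C, α)`-good functions of Kleinbock and Margulis: on a ball of radius `‖u‖`, the points where
`f` is smaller than `η` times a value it takes there have measure at most `ε` times that of the
concentric ball of radius `‖u * ϖ‖`. Taking norms of scalars as radii makes the notion invariant
under affine changes of variable. -/
def IsRarelySmall {k E : Type*} [NormedField k] [SeminormedAddCommGroup E] [MeasurableSpace E]
    (μ : Measure E) (ϖ : k) (ε : ℝ≥0∞) (η : ℝ) (f : E → k) : Prop :=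
  ∀ u : k, u ≠ 0 → ∀ x₀ : E, ∀ x ∈ closedBall x₀ ‖u‖,
    μ {t ∈ closedBall x₀ ‖u‖ | ‖f t‖ < η * ‖f x‖} ≤ ε * μ (closedBall x₀ ‖u * ϖ‖)

lemma exists_forall_isRarelySmall_eval {k σ : Type*} [NontriviallyNormedField k] [ProperSpace k]
    [IsUltrametricDist k] [Fintype σ] [MeasurableSpace (σ → k)] [BorelSpace (σ → k)]
    (μ : Measure (σ → k)) [μ.IsAddHaarMeasure] {ϖ : k} (hϖ : ϖ ≠ 0) {ε : ℝ≥0∞} (hε : ε ≠ 0)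
    (N : ℕ) :
    ∃ η > 0, ∀ p : MvPolynomial σ k, p.totalDegree ≤ N →
      IsRarelySmall μ ϖ ε η fun t => eval t p := by
  have hball₀ : μ (closedBall 0 ‖ϖ‖) ≠ 0 :=
    (measure_closedBall_pos μ 0 (norm_pos_iff.2 hϖ)).ne'
  obtain ⟨η, hη, h⟩ := exists_forall_measure_norm_eval_lt_unitBall μ N (mul_ne_zero hε hball₀)
  refine ⟨η, hη, fun p hp u hu x₀ x hx => ?_⟩
  obtain ⟨κ, hκ⟩ := exists_measure_eq_mul_measure_affine_preimage μ hu
  obtain ⟨q, hqp, hq⟩ := exists_eval_eq_eval_affine p x₀ u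
  have hball (w : k) (y : σ → k) :
      x₀ + u • y ∈ closedBall x₀ ‖u * w‖ ↔ y ∈ closedBall 0 ‖w‖ := by
    rw [mem_closedBall_iff_norm, add_sub_cancel_left, norm_smul, norm_mul,
      mem_closedBall_zero_iff, mul_le_mul_iff_right₀ (norm_pos_iff.2 hu)]
  have hball_one (y : σ → k) : x₀ + u • y ∈ closedBall x₀ ‖u‖ ↔ y ∈ closedBall 0 1 := by
    simpa only [mul_one, norm_one] using hball 1 y
  obtain ⟨y, rfl⟩ : ∃ y, x₀ + u • y = x :=
    ⟨u⁻¹ • (x - x₀), by rw [smul_inv_smul₀ hu, add_sub_cancel]⟩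
  rw [hκ x₀ {t ∈ closedBall x₀ ‖u‖ | _}, hκ x₀ (closedBall x₀ ‖u * ϖ‖), mul_left_comm]
  gcongr
  simpa only [mem_ofPred_eq, hball_one, hball, hq, ofPred_mem_eq] using
    h q (hqp.trans hp) y ((hball_one y).1 hx)

section MaximalBalls

variable {X : Type*} [PseudoMetricSpace X]

/-- The balls of radius `ρ (n + 1)` contained in `G` whose concentric balls of radius `ρ n` are not:
for decreasing `ρ` these are the maximal balls inside `G` with radius among the `ρ n`. -/
def maximalBalls (ρ : ℕ → ℝ) (G : Set X) : Set (Set X) :=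
  {J | ∃ n x, J = closedBall x (ρ (n + 1)) ∧ J ⊆ G ∧ ¬ closedBall x (ρ n) ⊆ G}

variable {ρ : ℕ → ℝ} {G : Set X}

lemma sUnion_maximalBalls (hρ : ∀ n, 0 < ρ n) (hlim : Tendsto ρ atTop (𝓝 0)) (hG : IsOpen G)
    (hlarge : ∀ x ∈ G, ¬ closedBall x (ρ 0) ⊆ G) : ⋃₀ maximalBalls ρ G = G := by
  refine Subset.antisymm (sUnion_subset ?_) fun x hx => ?_
  · rintro J ⟨_, _, _, hJG, _⟩
    exact hJG
  have hex : ∃ n, closedBall x (ρ n) ⊆ G := by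
    obtain ⟨r, hr, hball⟩ := nhds_basis_closedBall.mem_iff.1 (hG.mem_nhds hx)
    obtain ⟨n, hn⟩ := (hlim.eventually_lt_const hr).exists
    exact ⟨n, (closedBall_subset_closedBall hn.le).trans hball⟩
  classical
  obtain ⟨n, hn⟩ : ∃ n, Nat.find hex = n + 1 :=
    Nat.exists_eq_succ_of_ne_zero fun h => hlarge x hx (h ▸ Nat.find_spec hex)
  exact ⟨closedBall x (ρ (n + 1)), ⟨n, x, rfl, hn ▸ Nat.find_spec hex,
    Nat.find_min hex (hn ▸ n.lt_succ_self)⟩, mem_closedBall_self (hρ _).le⟩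

lemma pairwiseDisjoint_maximalBalls [IsUltrametricDist X] (hρ : Antitone ρ) :
    (maximalBalls ρ G).PairwiseDisjoint id := by
  rintro _ ⟨n, x, rfl, hxG, hx⟩ _ ⟨m, y, rfl, hyG, hy⟩ hne
  wlog hnm : n ≤ m generalizing n m x y
  · exact (this m y hyG hy n x hxG hx hne.symm (not_le.1 hnm).le).symm
  rcases hnm.eq_or_lt with rfl | hlt
  · exact (IsUltrametricDist.closedBall_eq_or_disjoint x y _).resolve_left hne
  · refine Set.disjoint_left.2 fun z hzx hzy => hy ?_
    have hball : closedBall x (ρ (n + 1)) = closedBall y (ρ (n + 1)) :=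
      (IsUltrametricDist.closedBall_eq_of_mem hzx).trans
        (IsUltrametricDist.closedBall_eq_of_mem
          (closedBall_subset_closedBall (hρ (Nat.succ_le_succ hnm)) hzy)).symm
    exact (closedBall_subset_closedBall (hρ hlt)).trans (hball ▸ hxG)

variable [MeasurableSpace X] [OpensMeasurableSpace X] [TopologicalSpace.SeparableSpace X]
  [IsUltrametricDist X] {μ : Measure X}

lemma measure_le_mul_of_forall_maximalBalls (hρ : ∀ n, 0 < ρ n) (hanti : Antitone ρ)
    (hlim : Tendsto ρ atTop (𝓝 0)) (hG : IsOpen G) (hlarge : ∀ x ∈ G, ¬ closedBall x (ρ 0) ⊆ G)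
    {E : Set X} (hEG : E ⊆ G) {c : ℝ≥0∞} (h : ∀ J ∈ maximalBalls ρ G, μ (E ∩ J) ≤ c * μ J) :
    μ E ≤ c * μ G := by
  have hdisj : (maximalBalls ρ G).PairwiseDisjoint id := pairwiseDisjoint_maximalBalls hanti
  have hcount : (maximalBalls ρ G).Countable := by
    refine hdisj.countable_of_isOpen ?_ ?_ <;> rintro _ ⟨n, x, rfl, -⟩
    · exact IsUltrametricDist.isOpen_closedBall x (hρ _).ne'
    · exact ⟨x, mem_closedBall_self (hρ _).le⟩
  have hmeas : ∀ J ∈ maximalBalls ρ G, MeasurableSet J := by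
    rintro _ ⟨n, x, rfl, -⟩
    exact isClosed_closedBall.measurableSet
  have hunion := sUnion_maximalBalls hρ hlim hG hlarge
  calc μ E = μ (⋃ J ∈ maximalBalls ρ G, E ∩ J) := by
        rw [← inter_iUnion₂, ← sUnion_eq_biUnion, hunion, inter_eq_left.2 hEG]
    _ ≤ ∑' J : maximalBalls ρ G, μ (E ∩ J) := measure_biUnion_le _ hcount _
    _ ≤ ∑' J : maximalBalls ρ G, c * μ J := ENNReal.tsum_le_tsum fun J => h J J.2
    _ = c * μ G := by rw [ENNReal.tsum_mul_left, ← measure_sUnion hcount hdisj hmeas, hunion]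

end MaximalBalls

lemma exists_ball_eq_closedBall_norm {k σ : Type*} [NontriviallyNormedField k] [ProperSpace k]
    [IsUltrametricDist k] [Fintype σ] (x : σ → k) {r : ℝ} (hr : 0 < r) :
    ∃ u : k, u ≠ 0 ∧ ball x r = closedBall x ‖u‖ := by
  have hcompact : IsCompact (ball (0 : k) r) :=
    (isCompact_closedBall (0 : k) r).of_isClosed_subset (IsUltrametricDist.isClosed_ball 0 r)
      ball_subset_closedBall
  obtain ⟨u, hu, hmax⟩ := hcompact.exists_isMaxOn ⟨0, mem_ball_self hr⟩
    continuous_norm.continuousOn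
  have hle {w : k} (hw : ‖w‖ < r) : ‖w‖ ≤ ‖u‖ := hmax (mem_ball_zero_iff.2 hw)
  rw [mem_ball_zero_iff] at hu
  obtain ⟨w, hw₀, hw⟩ := NormedField.exists_norm_lt k hr
  refine ⟨u, norm_pos_iff.1 (hw₀.trans_le (hle hw)),
    Subset.antisymm (fun t ht => ?_) (closedBall_subset_ball hu)⟩
  rw [mem_ball_iff_norm] at ht
  rw [mem_closedBall_iff_norm, pi_norm_le_iff_of_nonneg (norm_nonneg u)]
  exact fun i => hle ((norm_le_pi_norm _ i).trans_lt ht)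

lemma measure_preimage_le_mul_of_isRarelySmall {k σ Y : Type*} [NontriviallyNormedField k]
    [ProperSpace k] [IsUltrametricDist k] [Fintype σ] [MeasurableSpace (σ → k)]
    [BorelSpace (σ → k)] {μ : Measure (σ → k)} [TopologicalSpace Y] {φ : (σ → k) → Y}
    (hφ : Continuous φ) {Q G : Set Y} (hQG : Q ⊆ G) (hG : IsOpen G) {ϖ : k} (hϖ₀ : ϖ ≠ 0)
    (hϖ₁ : ‖ϖ‖ < 1) {ε : ℝ≥0∞}
    (hsep : ∀ x ∉ G, ∃ (f : Y → k) (η : ℝ),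
      (∀ y ∈ Q, ‖f y‖ < η * ‖f x‖) ∧ IsRarelySmall μ ϖ ε η (f ∘ φ))
    {t₀ : σ → k} (ht₀ : φ t₀ ∉ G) {r : ℝ} (hr : 0 < r) :
    μ {t ∈ ball t₀ r | φ t ∈ Q} ≤ ε * μ {t ∈ ball t₀ r | φ t ∈ G} := by
  obtain ⟨u, hu, hball⟩ := exists_ball_eq_closedBall_norm t₀ hr
  rw [hball]
  have hρ (n : ℕ) : u * ϖ ^ n ≠ 0 := mul_ne_zero hu (pow_ne_zero n hϖ₀)
  have hanti : Antitone fun n => ‖u * ϖ ^ n‖ := antitone_nat_of_succ_le fun n => by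
    rw [pow_succ, ← mul_assoc, norm_mul]
    exact mul_le_of_le_one_right (norm_nonneg _) hϖ₁.le
  have hlim : Tendsto (fun n => ‖u * ϖ ^ n‖) atTop (𝓝 0) := by
    simpa using ((tendsto_pow_atTop_nhds_zero_of_norm_lt_one hϖ₁).const_mul u).norm
  have hρ_le (n : ℕ) : ‖u * ϖ ^ n‖ ≤ ‖u‖ := by simpa using hanti n.zero_le
  have hopen : IsOpen {t ∈ closedBall t₀ ‖u‖ | φ t ∈ G} :=
    (IsUltrametricDist.isOpen_closedBall t₀ (norm_ne_zero_iff.2 hu)).inter (hG.preimage hφ)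
  refine measure_le_mul_of_forall_maximalBalls (fun n => norm_pos_iff.2 (hρ n)) hanti hlim hopen
    (fun x hx hsub => ht₀ ?_) (fun t ht => ⟨ht.1, hQG ht.2⟩) ?_
  · refine (hsub ?_).2
    rw [pow_zero, mul_one]
    exact mem_closedBall_comm.1 hx.1
  · rintro _ ⟨n, x, rfl, hJ, hnot⟩
    obtain ⟨s, hs, hsG⟩ := Set.not_subset.1 hnot
    have hx : x ∈ closedBall t₀ ‖u‖ := (hJ (mem_closedBall_self (norm_nonneg _))).1
    have hs_ball : s ∈ closedBall t₀ ‖u‖ := by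
      rw [IsUltrametricDist.closedBall_eq_of_mem hx]
      exact closedBall_subset_closedBall (hρ_le n) hs
    obtain ⟨f, η, hQ, hf⟩ := hsep (φ s) fun h => hsG ⟨hs_ball, h⟩
    calc μ ({t ∈ closedBall t₀ ‖u‖ | φ t ∈ Q} ∩ closedBall x ‖u * ϖ ^ (n + 1)‖)
        ≤ μ {t ∈ closedBall x ‖u * ϖ ^ n‖ | ‖f (φ t)‖ < η * ‖f (φ s)‖} :=
          measure_mono fun t ht =>
            ⟨closedBall_subset_closedBall (hanti n.le_succ) ht.2, hQ _ ht.1.2⟩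
      _ ≤ ε * μ (closedBall x ‖u * ϖ ^ n * ϖ‖) := hf _ (hρ n) x s hs
      _ = ε * μ (closedBall x ‖u * ϖ ^ (n + 1)‖) := by rw [pow_succ, mul_assoc]

section Separation

variable {k ι : Type*} [NormedField k] {S : Set (MvPolynomial ι k)}

lemma isClosed_setOfPred_forall_eval_eq_zero (S : Set (MvPolynomial ι k)) :
    IsClosed {x : ι → k | ∀ p ∈ S, eval x p = 0} := by
  simp only [ofPred_forall]
  exact isClosed_biInter fun p _ =>
    isClosed_singleton.preimage (MvPolynomial.continuous_eval p)

lemma exists_finite_forall_exists_lt_norm_eval {K : Set (ι → k)} (hK : IsCompact K)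
    (hKS : ∀ x ∈ K, ∃ p ∈ S, eval x p ≠ 0) :
    ∃ F ⊆ S, F.Finite ∧ ∃ δ > 0, ∀ x ∈ K, ∃ p ∈ F, δ < ‖eval x p‖ := by
  refine hK.induction_on
    (p := fun K => ∃ F ⊆ S, F.Finite ∧ ∃ δ > 0, ∀ x ∈ K, ∃ p ∈ F, δ < ‖eval x p‖)
    ⟨∅, empty_subset _, finite_empty, 1, one_pos, fun x hx => hx.elim⟩
    (fun K K' hKK' ⟨F, hFS, hF, δ, hδ, h⟩ => ⟨F, hFS, hF, δ, hδ, fun x hx => h x (hKK' hx)⟩)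
    ?_ fun x hx => ?_
  · rintro K K' ⟨F, hFS, hF, δ, hδ, h⟩ ⟨F', hFS', hF', δ', hδ', h'⟩
    refine ⟨F ∪ F', union_subset hFS hFS', hF.union hF', min δ δ', lt_min hδ hδ', ?_⟩
    rintro x (hx | hx)
    · obtain ⟨p, hp, hpx⟩ := h x hx
      exact ⟨p, .inl hp, (min_le_left _ _).trans_lt hpx⟩
    · obtain ⟨p, hp, hpx⟩ := h' x hx
      exact ⟨p, .inr hp, (min_le_right _ _).trans_lt hpx⟩
  · obtain ⟨p, hp, hpx⟩ := hKS x hx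
    obtain ⟨δ, hδ, hδp⟩ := exists_between (norm_pos_iff.2 hpx)
    refine ⟨{y | δ < ‖eval y p‖}, mem_nhdsWithin_of_mem_nhds
      ((isOpen_lt continuous_const (MvPolynomial.continuous_eval p).norm).mem_nhds hδp),
      {p}, singleton_subset_iff.2 hp, finite_singleton p, δ, hδ, fun y hy => ⟨p, rfl, hy⟩⟩

/- Far from the origin a coordinate function separates; on the remaining compact set, finitely many
of the equations of `M` do. -/
lemma exists_isCompact_forall_separated [ProperSpace k] [Finite ι] {M A : Set (ι → k)}
    (hM : M = {x | ∀ p ∈ S, eval x p = 0}) (hA : A ⊆ M) (hAc : IsCompact A) {η : ℕ → ℝ}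
    (hη : ∀ n, 0 < η n) :
    ∃ B ⊆ M, IsCompact B ∧ ∀ G, IsOpen G → B ⊆ G → ∃ Q, IsOpen Q ∧ A ⊆ Q ∧ Q ⊆ G ∧
      ∀ x ∉ G, ∃ f : MvPolynomial ι k,
        ∀ y ∈ Q, ‖eval y f‖ < η f.totalDegree * ‖eval x f‖ := by
  have := Fintype.ofFinite ι
  obtain ⟨R, hR, hAR⟩ := hAc.isBounded.subset_ball_lt 0 0
  let R' := R / η 1
  have hM_closed : IsClosed M := hM ▸ isClosed_setOfPred_forall_eval_eq_zero S
  refine ⟨M ∩ closedBall 0 (max R R'), inter_subset_left,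
    (isCompact_closedBall 0 _).inter_left hM_closed, fun G hG hBG => ?_⟩
  have hS : ∀ x ∈ closedBall 0 R' \ G, ∃ p ∈ S, eval x p ≠ 0 := fun x hx => by
    have hxM : x ∉ M := fun h =>
      hx.2 (hBG ⟨h, closedBall_subset_closedBall (le_max_right _ _) hx.1⟩)
    simpa only [hM, mem_ofPred_eq, not_forall, exists_prop] using hxM
  obtain ⟨F, hFS, hF, δ, hδ, hFδ⟩ :=
    exists_finite_forall_exists_lt_norm_eval ((isCompact_closedBall 0 R').diff hG) hS
  refine ⟨G ∩ ball 0 R ∩ ⋂ p ∈ F, {x | ‖eval x p‖ < η p.totalDegree * δ},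
    (hG.inter isOpen_ball).inter (hF.isOpen_biInter fun p _ =>
      isOpen_lt (MvPolynomial.continuous_eval p).norm continuous_const),
    fun x hx => ⟨⟨hBG ⟨hA hx, ?_⟩, hAR hx⟩, mem_iInter₂.2 fun p hp => ?_⟩,
    fun x hx => hx.1.1, fun x hx => ?_⟩
  · exact ball_subset_closedBall (ball_subset_ball (le_max_left _ _) (hAR hx))
  · have hxS := hM ▸ hA hx
    rw [mem_ofPred_eq, hxS p (hFS hp), norm_zero]
    exact mul_pos (hη _) hδ
  by_cases hxR' : ‖x‖ ≤ R'
  · obtain ⟨p, hp, hpx⟩ := hFδ x ⟨mem_closedBall_zero_iff.2 hxR', hx⟩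
    exact ⟨p, fun y hy => lt_trans (mem_iInter₂.1 hy.2 p hp)
      (mul_lt_mul_of_pos_left hpx (hη _))⟩
  · obtain ⟨j, hj⟩ : ∃ j, R' < ‖x j‖ := by
      by_contra! h
      exact hxR' ((pi_norm_le_iff_of_nonneg (div_pos hR (hη 1)).le).2 h)
    refine ⟨X j, fun y hy => ?_⟩
    rw [eval_X, eval_X, totalDegree_X]
    calc ‖y j‖ ≤ ‖y‖ := norm_le_pi_norm y j
      _ < R := mem_ball_zero_iff.1 hy.1.2
      _ = η 1 * R' := (mul_div_cancel₀ R (hη 1).ne').symm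
      _ ≤ η 1 * ‖x j‖ := by gcongr; exact (hη 1).le

end Separation

theorem linearization_measure_estimate_general {k ι σ : Type*} [NontriviallyNormedField k]
    [ProperSpace k] [IsUltrametricDist k] [Finite ι] [Fintype σ] [MeasurableSpace (σ → k)]
    [BorelSpace (σ → k)] (lam : Measure (σ → k)) [lam.IsAddHaarMeasure] {M A : Set (ι → k)}
    {S : Set (MvPolynomial ι k)} (hM : M = {x | ∀ p ∈ S, eval x p = 0}) (hA : A ⊆ M)
    (hAc : IsCompact A) {ε : ℝ≥0∞} (hε : ε ≠ 0) (D : ℕ) :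
    ∃ B ⊆ M, IsCompact B ∧ ∀ 𝒬₀, IsOpen 𝒬₀ → B ⊆ 𝒬₀ → ∃ 𝒬, IsOpen 𝒬 ∧ A ⊆ 𝒬 ∧
      ∀ g : ι → MvPolynomial σ k, (∀ i, (g i).totalDegree ≤ D) →
        ∀ t₀, (fun i => eval t₀ (g i)) ∉ 𝒬₀ → ∀ r, 0 < r →
          lam {t ∈ ball t₀ r | (fun i => eval t (g i)) ∈ 𝒬} ≤
            ε * lam {t ∈ ball t₀ r | (fun i => eval t (g i)) ∈ 𝒬₀} := by
  obtain ⟨ϖ, hϖ₀, hϖ₁⟩ := NormedField.exists_norm_lt_one k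
  rw [norm_pos_iff] at hϖ₀
  choose η hη hsmall using exists_forall_isRarelySmall_eval lam hϖ₀ hε
  obtain ⟨B, hBM, hB, hsep⟩ :=
    exists_isCompact_forall_separated hM hA hAc fun n => hη (n * D)
  refine ⟨B, hBM, hB, fun 𝒬₀ h𝒬₀ hB𝒬₀ => ?_⟩
  obtain ⟨𝒬, h𝒬, hA𝒬, h𝒬𝒬₀, hsep⟩ := hsep 𝒬₀ h𝒬₀ hB𝒬₀
  refine ⟨𝒬, h𝒬, hA𝒬, fun g hg t₀ ht₀ r hr => ?_⟩
  have hφ : Continuous fun t : σ → k => fun i => eval t (g i) :=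
    continuous_pi fun i => MvPolynomial.continuous_eval (g i)
  refine measure_preimage_le_mul_of_isRarelySmall hφ h𝒬𝒬₀ h𝒬₀ hϖ₀ hϖ₁ (fun x hx => ?_) ht₀ hr
  obtain ⟨f, hf⟩ := hsep x hx
  refine ⟨fun y => eval y f, η (f.totalDegree * D), hf, ?_⟩
  simpa only [Function.comp_def, eval_bind₁] using hsmall _ _ (totalDegree_bind₁_le hg f)

section MatrixOrbit

variable {ι κ σ R : Type*} [Fintype κ] [CommSemiring R]

lemma eval_mulVec_C (P : Matrix ι κ (MvPolynomial σ R)) (a : κ → R) (t : σ → R) :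
    (fun i => eval t (P.mulVec (C ∘ a) i)) =
      (Matrix.of fun i j => eval t (P i j)).mulVec a := by
  ext i
  simp [Matrix.mulVec, dotProduct]

lemma totalDegree_mulVec_C_le {D : ℕ} {P : Matrix ι κ (MvPolynomial σ R)}
    (hP : ∀ i j, (P i j).totalDegree ≤ D) (a : κ → R) (i : ι) :
    (P.mulVec (C ∘ a) i).totalDegree ≤ D :=
  totalDegree_finsetSum_le fun j _ => (totalDegree_mul _ _).trans <| by
    rw [Function.comp_apply, totalDegree_C, add_zero]
    exact hP i j

end MatrixOrbit

theorem linearization_measure_estimate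
    (k : Type*) [NontriviallyNormedField k] [LocallyCompactSpace k]
    [IsUltrametricDist k]
    (m : ℕ)
    -- `M` is a Zariski closed subset of `k^m`:
    (M : Set (Fin m → k)) (S : Set (MvPolynomial (Fin m) k))
    (hM : M = {x : Fin m → k | ∀ p ∈ S, MvPolynomial.eval x p = 0})
    (A : Set (Fin m → k)) (hA : A ⊆ M) (hAc : IsCompact A)
    (ε : ℝ) (hε : 0 < ε) (d D : ℕ)
    [MeasurableSpace (Fin d → k)] [BorelSpace (Fin d → k)]
    (lam : Measure (Fin d → k)) [lam.IsAddHaarMeasure] :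
    ∃ B : Set (Fin m → k), B ⊆ M ∧ IsCompact B ∧
      ∀ 𝒬₀ : Set (Fin m → k), IsOpen 𝒬₀ → B ⊆ 𝒬₀ →
      ∃ 𝒬 : Set (Fin m → k), IsOpen 𝒬 ∧ A ⊆ 𝒬 ∧
        -- for every unipotent subgroup of `GL_m(k)` with a polynomial
        -- parametrization `𝐮` of degree `≤ D` and `𝐮(0) = e`:
        ∀ uP : Matrix (Fin m) (Fin m) (MvPolynomial (Fin d) k),
          (∀ i j, (uP i j).totalDegree ≤ D) →
          (Matrix.of fun i j => MvPolynomial.eval (0 : Fin d → k) (uP i j)) = 1 →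
          (∀ t : Fin d → k, IsNilpotent
            ((Matrix.of fun i j => MvPolynomial.eval t (uP i j)) - 1)) →
          (∀ t t' : Fin d → k, ∃ t'' : Fin d → k,
            (Matrix.of fun i j => MvPolynomial.eval t (uP i j)) *
              (Matrix.of fun i j => MvPolynomial.eval t' (uP i j)) =
            (Matrix.of fun i j => MvPolynomial.eval t'' (uP i j))) →
          (∀ t : Fin d → k, ∃ t' : Fin d → k,
            (Matrix.of fun i j => MvPolynomial.eval t (uP i j)) *
              (Matrix.of fun i j => MvPolynomial.eval t' (uP i j)) = 1) →
          ∀ a : Fin m → k, a ∉ 𝒬₀ →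
          ∀ r : ℝ, 0 < r →
            lam {t ∈ Metric.ball 0 r |
                (Matrix.of fun i j => MvPolynomial.eval t (uP i j)).mulVec a ∈ 𝒬} ≤
              ENNReal.ofReal ε *
                lam {t ∈ Metric.ball 0 r |
                  (Matrix.of fun i j => MvPolynomial.eval t (uP i j)).mulVec a ∈ 𝒬₀} := by
  have : ProperSpace k := .of_locallyCompactSpace k
  obtain ⟨B, hBM, hB, h⟩ := linearization_measure_estimate_general lam hM hA hAc
    (ENNReal.ofReal_pos.2 hε).ne' D
  refine ⟨B, hBM, hB, fun 𝒬₀ h𝒬₀ hB𝒬₀ => ?_⟩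
  obtain ⟨𝒬, h𝒬, hA𝒬, h⟩ := h 𝒬₀ h𝒬₀ hB𝒬₀
  refine ⟨𝒬, h𝒬, hA𝒬, fun uP hdeg hone _ _ _ a ha r hr => ?_⟩
  simpa only [eval_mulVec_C] using h (fun i => uP.mulVec (C ∘ a) i)
    (totalDegree_mulVec_C_le hdeg a) 0 (by rwa [eval_mulVec_C, hone, Matrix.one_mulVec]) r hr
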